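/- Let Φ : Mₙ(ℂ) → M_d(ℂ) be a unital positive linear map, A positive semidefinite, and p, q, r ≥ 0 with q ≥ p and q ≥ r. Then there exist unitaries U, V ∈ M_d(ℂ) such that |Φ(A^p)Φ(A^q)Φ(A^r)| ≤ (U Φ(A^{p+q+r}) U* + V Φ(A^{p+q+r}) V*)/2. -/

import Mathlib

open scoped Matrix ComplexOrder

/-- `A^p` for a matrix, via continuous functional calculus with the real power function. -/
noncomputable def mpow {n : ℕ} (A : Matrix (Fin n) (Fin n) ℂ) (p : ℝ) : Matrix (Fin n) (Fin n) ℂ :=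
  cfc (fun x : ℝ => x ^ p) A

/-- Matrix absolute value `|X| = (XᴴX)^{1/2}`. -/
noncomputable def matAbs {n : ℕ} (X : Matrix (Fin n) (Fin n) ℂ) : Matrix (Fin n) (Fin n) ℂ :=
  cfc Real.sqrt (Xᴴ * X)

/-- Loewner order: `X ≤ Y` iff `Y - X` is positive semidefinite. -/
def loewnerLE {n : ℕ} (X Y : Matrix (Fin n) (Fin n) ℂ) : Prop := (Y - X).PosSemidef
section TPU
open Matrix

noncomputable def qf {d : ℕ} (M : Matrix (Fin d) (Fin d) ℂ) (x : Fin d → ℂ) : ℝ :=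
  (star x ⬝ᵥ M *ᵥ x).re

lemma qf_add {d : ℕ} (M N : Matrix (Fin d) (Fin d) ℂ) (x : Fin d → ℂ) :
    qf (M + N) x = qf M x + qf N x := by
  simp [qf, Matrix.add_mulVec, dotProduct_add]

lemma qf_sub {d : ℕ} (M N : Matrix (Fin d) (Fin d) ℂ) (x : Fin d → ℂ) :
    qf (M - N) x = qf M x - qf N x := by
  simp [qf, Matrix.sub_mulVec, dotProduct_sub]

lemma qf_smul {d : ℕ} (c : ℝ) (M : Matrix (Fin d) (Fin d) ℂ) (x : Fin d → ℂ) :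
    qf ((c : ℂ) • M) x = c * qf M x := by
  simp [qf, Matrix.smul_mulVec, dotProduct_smul]

lemma qf_sum {d : ℕ} {ι : Type*} (s : Finset ι) (M : ι → Matrix (Fin d) (Fin d) ℂ)
    (x : Fin d → ℂ) :
    qf (∑ i ∈ s, M i) x = ∑ i ∈ s, qf (M i) x := by
  simp [qf, Matrix.sum_mulVec, dotProduct_sum]

lemma qf_conj {d : ℕ} (B M : Matrix (Fin d) (Fin d) ℂ) (x : Fin d → ℂ) :
    qf (Bᴴ * M * B) x = qf M (B *ᵥ x) := by
  simp only [qf]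
  rw [← mulVec_mulVec, ← mulVec_mulVec, dotProduct_mulVec, ← star_mulVec]

lemma qf_diag {d : ℕ} (l : Fin d → ℝ) (x : Fin d → ℂ) :
    qf (diagonal (fun i => (l i : ℂ))) x = ∑ i, l i * Complex.normSq (x i) := by
  simp only [qf, dotProduct, mulVec_diagonal, Complex.re_sum, Pi.star_apply]
  refine Finset.sum_congr rfl fun i _ => ?_
  simp [Complex.normSq_apply]; ring

lemma qf_one {d : ℕ} (x : Fin d → ℂ) : qf 1 x = ∑ i, Complex.normSq (x i) := by
  have := qf_diag (fun _ => 1) x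
  simpa using this

lemma qf_one_pos {d : ℕ} {x : Fin d → ℂ} (hx : x ≠ 0) : 0 < qf 1 x := by
  rw [qf_one]
  obtain ⟨i, hi⟩ := Function.ne_iff.mp hx
  exact Finset.sum_pos' (fun i _ => Complex.normSq_nonneg _)
    ⟨i, Finset.mem_univ _, Complex.normSq_pos.mpr hi⟩

lemma psd_of_qf {d : ℕ} {M : Matrix (Fin d) (Fin d) ℂ} (hM : M.IsHermitian)
    (h : ∀ x, 0 ≤ qf M x) : M.PosSemidef := by
  refine PosSemidef.of_dotProduct_mulVec_nonneg hM fun x => ?_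
  rw [Complex.nonneg_iff]
  refine ⟨h x, ?_⟩
  exact (hM.im_star_dotProduct_mulVec_self x).symm

lemma psd_qf {d : ℕ} {M : Matrix (Fin d) (Fin d) ℂ} (hM : M.PosSemidef) (x) : 0 ≤ qf M x :=
  (Complex.nonneg_iff.mp (hM.dotProduct_mulVec_nonneg x)).1

lemma spec {d : ℕ} {M : Matrix (Fin d) (Fin d) ℂ} (hM : M.IsHermitian) :
    M = (hM.eigenvectorUnitary : Matrix (Fin d) (Fin d) ℂ) *
      diagonal (fun i => (hM.eigenvalues i : ℂ)) *
      (hM.eigenvectorUnitary : Matrix (Fin d) (Fin d) ℂ)ᴴ := by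
  exact hM.spectral_theorem

lemma qf_spec {d : ℕ} {M : Matrix (Fin d) (Fin d) ℂ} (hM : M.IsHermitian) (x) :
    qf M x = ∑ i, hM.eigenvalues i *
      Complex.normSq (((hM.eigenvectorUnitary : Matrix (Fin d) (Fin d) ℂ)ᴴ *ᵥ x) i) := by
  rw [← qf_diag, ← qf_conj]
  simp only [conjTranspose_conjTranspose]
  rw [← spec]

lemma qf_one_unitary {d : ℕ} (U : unitaryGroup (Fin d) ℂ) (x) :
    qf 1 x = ∑ i, Complex.normSq (((U : Matrix (Fin d) (Fin d) ℂ)ᴴ *ᵥ x) i) := by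
  rw [← qf_one, ← qf_conj]
  congr 1
  rw [conjTranspose_conjTranspose, mul_one]
  exact (Unitary.coe_mul_star_self U).symm

lemma domination {d : ℕ} {M W P : Matrix (Fin d) (Fin d) ℂ} (hM : M.IsHermitian)
    (hW : W.PosSemidef)
    (H : ∀ c : ℝ, 0 < c → ∀ x, x ≠ 0 → c * qf 1 x ≤ qf M x →
      P *ᵥ x ≠ 0 ∧ c * qf 1 (P *ᵥ x) ≤ qf W (P *ᵥ x)) :
    ∃ U ∈ unitaryGroup (Fin d) ℂ, (U * W * Uᴴ - M).PosSemidef := by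
  have hWh := hW.isHermitian
  have key : ∀ i, hM.eigenvalues i ≤ hWh.eigenvalues i := by
    intro i
    by_cases hc : hM.eigenvalues i ≤ 0
    · exact hc.trans (hW.eigenvalues_nonneg i)
    push Not at hc
    set e := (Fintype.equivOfCardEq (α := Fin (Fintype.card (Fin d))) (β := Fin d)
      (Fintype.card_fin _)).symm with he
    let L : (Fin d → ℂ) →ₗ[ℂ] ({j : Fin d // j ≠ i} → ℂ) := LinearMap.pi fun j =>
      if e i < e j then (LinearMap.proj (j : Fin d)) ∘ₗ
        (hM.eigenvectorUnitary : Matrix (Fin d) (Fin d) ℂ)ᴴ.mulVecLin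
      else (LinearMap.proj (j : Fin d)) ∘ₗ
        (hWh.eigenvectorUnitary : Matrix (Fin d) (Fin d) ℂ)ᴴ.mulVecLin ∘ₗ P.mulVecLin
    have hker : LinearMap.ker L ≠ ⊥ := by
      apply LinearMap.ker_ne_bot_of_finrank_lt
      simp only [Module.finrank_fintype_fun_eq_card]
      have := Fintype.card_subtype_lt (p := fun j : Fin d => j ≠ i) (x := i) (by simp)
      simpa using this
    obtain ⟨x, hx, hx0⟩ := (Submodule.ne_bot_iff _).mp hker
    have hL : ∀ j, j ≠ i → (if e i < e j then
        ((hM.eigenvectorUnitary : Matrix (Fin d) (Fin d) ℂ)ᴴ *ᵥ x) j = 0 else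
        ((hWh.eigenvectorUnitary : Matrix (Fin d) (Fin d) ℂ)ᴴ *ᵥ (P *ᵥ x)) j = 0) := by
      intro j hj
      have := congrFun (LinearMap.mem_ker.mp hx) ⟨j, hj⟩
      simp only [L, LinearMap.pi_apply] at this
      split_ifs with h
      · simpa [h] using this
      · simpa [h] using this
    have h1 : hM.eigenvalues i * qf 1 x ≤ qf M x := by
      rw [qf_spec hM, qf_one_unitary hM.eigenvectorUnitary, Finset.mul_sum]
      refine Finset.sum_le_sum fun j _ => ?_
      by_cases hj : e i < e j
      · have h3 := hL j (by rintro rfl; exact lt_irrefl _ hj)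
        rw [if_pos hj] at h3
        simp [h3]
      · exact mul_le_mul_of_nonneg_right
          (hM.eigenvalues₀_antitone (not_lt.mp hj)) (Complex.normSq_nonneg _)
    obtain ⟨hy0, hy⟩ := H _ hc x hx0 h1
    have h2 : qf W (P *ᵥ x) ≤ hWh.eigenvalues i * qf 1 (P *ᵥ x) := by
      rw [qf_spec hWh, qf_one_unitary hWh.eigenvectorUnitary, Finset.mul_sum]
      refine Finset.sum_le_sum fun j _ => ?_
      by_cases hij : j = i
      · rw [hij]
      by_cases hj : e i < e j
      · exact mul_le_mul_of_nonneg_right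
          (hWh.eigenvalues₀_antitone hj.le) (Complex.normSq_nonneg _)
      · have h3 := hL j hij
        rw [if_neg hj] at h3
        simp [h3]
    exact le_of_mul_le_mul_right (hy.trans h2) (qf_one_pos hy0)
  refine ⟨hM.eigenvectorUnitary * star hWh.eigenvectorUnitary,
    (hM.eigenvectorUnitary * star hWh.eigenvectorUnitary).2, ?_⟩
  set UM : Matrix (Fin d) (Fin d) ℂ := hM.eigenvectorUnitary.1 with hUM
  set UW : Matrix (Fin d) (Fin d) ℂ := hWh.eigenvectorUnitary.1 with hUW
  have hUU : UWᴴ * UW = 1 := Unitary.coe_star_mul_self hWh.eigenvectorUnitary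
  have hEq : (UM * star UW) * W * (UM * star UW)ᴴ - M =
      UM * diagonal (fun i => ((hWh.eigenvalues i - hM.eigenvalues i : ℝ) : ℂ)) * UMᴴ := by
    have e1 : (UM * star UW) * W * (UM * star UW)ᴴ =
        UM * diagonal (fun i => (hWh.eigenvalues i : ℂ)) * UMᴴ := by
      conv_lhs => rw [spec hWh]
      rw [← hUW, star_eq_conjTranspose, conjTranspose_mul, conjTranspose_conjTranspose]
      calc _ = UM * (UWᴴ * UW) * diagonal (fun i => (hWh.eigenvalues i : ℂ)) *
            (UWᴴ * UW) * UMᴴ := by simp only [mul_assoc]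
        _ = _ := by simp only [hUU, mul_one]
    rw [e1]
    conv_lhs => rw [spec hM]
    rw [← hUM, ← sub_mul, ← mul_sub, diagonal_sub]
    simp
  change ((UM * star UW) * W * (UM * star UW)ᴴ - M).PosSemidef
  rw [hEq]
  refine PosSemidef.mul_mul_conjTranspose_same ?_ _
  refine PosSemidef.diagonal fun i => ?_
  simpa using key i

lemma cfc_spec {d : ℕ} {M : Matrix (Fin d) (Fin d) ℂ} (hM : M.IsHermitian) (f : ℝ → ℝ) :
    cfc f M = (hM.eigenvectorUnitary : Matrix (Fin d) (Fin d) ℂ) *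
      diagonal (fun i => (f (hM.eigenvalues i) : ℂ)) *
      (hM.eigenvectorUnitary : Matrix (Fin d) (Fin d) ℂ)ᴴ := by
  rw [hM.cfc_eq]; rfl

lemma polar {d : ℕ} (X : Matrix (Fin d) (Fin d) ℂ) :
    ∃ W ∈ unitaryGroup (Fin d) ℂ, Wᴴ * X = matAbs X := by
  have hH : (Xᴴ * X).IsHermitian := isHermitian_conjTranspose_mul_self X
  set V : Matrix (Fin d) (Fin d) ℂ := hH.eigenvectorUnitary.1 with hV
  have hVV : Vᴴ * V = 1 := Unitary.coe_star_mul_self hH.eigenvectorUnitary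
  have hVV' : V * Vᴴ = 1 := Unitary.coe_mul_star_self hH.eigenvectorUnitary
  have hnn : ∀ i, 0 ≤ hH.eigenvalues i := (posSemidef_conjTranspose_mul_self X).eigenvalues_nonneg
  set σ : Fin d → ℝ := fun i => √(hH.eigenvalues i) with hσ
  set Y := X * V with hY
  have hYY : Yᴴ * Y = diagonal (fun i => (hH.eigenvalues i : ℂ)) := by
    calc Yᴴ * Y = Vᴴ * (Xᴴ * X) * V := by
          rw [hY, conjTranspose_mul]; simp only [mul_assoc]
      _ = (Vᴴ * V) * diagonal (fun i => (hH.eigenvalues i : ℂ)) * (Vᴴ * V) := by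
          conv_lhs => rw [spec hH]
          simp only [mul_assoc, ← hV]
      _ = _ := by simp [hVV]
  let v : Fin d → EuclideanSpace ℂ (Fin d) := fun j => WithLp.toLp 2 (fun i => Y i j / (σ j : ℂ))
  have hin : ∀ i j, inner ℂ (v i) (v j) = (Yᴴ * Y) i j / (σ i * σ j : ℂ) := by
    intro i j
    simp only [v, PiLp.inner_apply, mul_apply, conjTranspose_apply, Finset.sum_div]
    refine Finset.sum_congr rfl fun k _ => ?_
    simp [div_eq_mul_inv]
    ring
  have hon : Orthonormal ℂ (({i | σ i ≠ 0} : Set (Fin d)).domRestrict v) := by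
    rw [orthonormal_iff_ite]
    rintro ⟨i, hi⟩ ⟨j, hj⟩
    change inner ℂ (v i) (v j) = _
    simp only [hin, hYY, Subtype.mk.injEq]
    by_cases hij : i = j
    · subst hij
      simp only [diagonal_apply_eq, if_true]
      have h4 : ((hH.eigenvalues i : ℝ) : ℂ) = σ i * σ i := by
        rw [← Complex.ofReal_mul, Real.mul_self_sqrt (hnn i)]
      rw [h4]
      have : (σ i : ℂ) ≠ 0 := Complex.ofReal_ne_zero.mpr hi
      exact div_self (mul_ne_zero this this)
    · simp [hij]
  obtain ⟨b, hb⟩ := hon.exists_orthonormalBasis_extension_of_card_eq (by simp)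
  let B : Matrix (Fin d) (Fin d) ℂ := fun i j => b j i
  have hBB : Bᴴ * B = 1 := by
    ext i j
    have := orthonormal_iff_ite.mp b.orthonormal i j
    rw [one_apply, ← this, PiLp.inner_apply, mul_apply]
    refine Finset.sum_congr rfl fun k _ => ?_
    rw [conjTranspose_apply]
    simp [B, mul_comm]
  have hBY : Y = B * diagonal (fun i => (σ i : ℂ)) := by
    ext i j
    rw [mul_diagonal]
    by_cases hj : σ j = 0
    · have h5 : (Yᴴ * Y) j j = 0 := by
        rw [hYY, diagonal_apply_eq]
        have := (Real.sqrt_eq_zero (hnn j)).mp hj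
        simp [this]
      have h6 : ∑ k, Complex.normSq (Y k j) = 0 := by
        have : ((∑ k, Complex.normSq (Y k j) : ℝ) : ℂ) = 0 := by
          rw [← h5, mul_apply]
          push_cast
          refine Finset.sum_congr rfl fun k _ => ?_
          simp [Complex.normSq_eq_conj_mul_self]
        exact_mod_cast this
      have h7 := (Finset.sum_eq_zero_iff_of_nonneg
        (fun k _ => Complex.normSq_nonneg _)).mp h6 i (Finset.mem_univ _)
      simp [hj, Complex.normSq_eq_zero.mp h7]
    · have : (σ j : ℂ) ≠ 0 := Complex.ofReal_ne_zero.mpr hj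
      have h8 := hb j hj
      simp only [B, h8, v]
      field_simp
  refine ⟨B * Vᴴ, ?_, ?_⟩
  · rw [mem_unitaryGroup_iff', star_eq_conjTranspose, conjTranspose_mul, conjTranspose_conjTranspose]
    calc V * Bᴴ * (B * Vᴴ) = V * (Bᴴ * B) * Vᴴ := by simp only [mul_assoc]
      _ = 1 := by rw [hBB, mul_one, hVV']
  · have hX : X = Y * Vᴴ := by rw [hY, mul_assoc, hVV', mul_one]
    rw [matAbs, cfc_spec hH, ← hV]
    conv_lhs => rw [hX]
    rw [hBY, conjTranspose_mul, conjTranspose_conjTranspose]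
    calc _ = V * (Bᴴ * B) * diagonal (fun i => (σ i : ℂ)) * Vᴴ := by simp only [mul_assoc]
      _ = _ := by rw [hBB, mul_one]

noncomputable def bf {d : ℕ} (M : Matrix (Fin d) (Fin d) ℂ) (x y : Fin d → ℂ) : ℝ :=
  (star x ⬝ᵥ M *ᵥ y).re

lemma bf_smul {d : ℕ} (c : ℝ) (M : Matrix (Fin d) (Fin d) ℂ) (x y : Fin d → ℂ) :
    bf ((c : ℂ) • M) x y = c * bf M x y := by
  simp [bf, Matrix.smul_mulVec, dotProduct_smul]

lemma bf_sum {d : ℕ} {ι : Type*} (s : Finset ι) (M : ι → Matrix (Fin d) (Fin d) ℂ)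
    (x y : Fin d → ℂ) :
    bf (∑ i ∈ s, M i) x y = ∑ i ∈ s, bf (M i) x y := by
  simp [bf, Matrix.sum_mulVec, dotProduct_sum]

lemma bf_neg {d : ℕ} (M : Matrix (Fin d) (Fin d) ℂ) (x y : Fin d → ℂ) :
    bf M (-x) y = - bf M x y := by
  simp [bf]

lemma qf_neg {d : ℕ} (M : Matrix (Fin d) (Fin d) ℂ) (x : Fin d → ℂ) :
    qf M (-x) = qf M x := by
  simp [qf, mulVec_neg]

lemma bf_mul {d : ℕ} (B M : Matrix (Fin d) (Fin d) ℂ) (x y : Fin d → ℂ) :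
    bf (Bᴴ * M) x y = bf M (B *ᵥ x) y := by
  simp only [bf]
  rw [← mulVec_mulVec, dotProduct_mulVec, ← star_mulVec]

lemma bf_mul_right {d : ℕ} (B M : Matrix (Fin d) (Fin d) ℂ) (x y : Fin d → ℂ) :
    bf (M * B) x y = bf M x (B *ᵥ y) := by
  simp only [bf]
  rw [← mulVec_mulVec]

lemma bf_comm {d : ℕ} {M : Matrix (Fin d) (Fin d) ℂ} (hM : M.IsHermitian) (x y : Fin d → ℂ) :
    bf M x y = bf M y x := by
  have : star (star x ⬝ᵥ M *ᵥ y) = star y ⬝ᵥ M *ᵥ x := by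
    rw [← star_dotProduct, star_mulVec, hM.eq, ← dotProduct_mulVec]
  rw [bf, bf, ← this]
  simp

lemma qf_comb {d : ℕ} {M : Matrix (Fin d) (Fin d) ℂ} (hM : M.IsHermitian) (s t : ℝ)
    (x y : Fin d → ℂ) :
    qf M ((s : ℂ) • x + (t : ℂ) • y) = s * s * qf M x + 2 * (s * t * bf M x y) + t * t * qf M y := by
  have h := bf_comm hM x y
  have : qf M ((s : ℂ) • x + (t : ℂ) • y) =
      s * s * qf M x + (s * t * bf M x y) + (s * t * bf M y x) + t * t * qf M y := by
    simp [qf, bf, mulVec_add, mulVec_smul, dotProduct_add, add_dotProduct]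
    ring
  rw [this, ← h]; ring

section fam
variable {m d : ℕ} (l : Fin m → ℝ) (E : Fin m → Matrix (Fin d) (Fin d) ℂ)

noncomputable def Ff (t : ℝ) : Matrix (Fin d) (Fin d) ℂ := ∑ i, ((l i ^ t : ℝ) : ℂ) • E i

lemma Ff_psd (hl : ∀ i, 0 ≤ l i) (hE : ∀ i, (E i).PosSemidef)
    (t : ℝ) : (Ff l E t).PosSemidef := by
  refine posSemidef_sum _ fun i _ => (hE i).smul ?_
  simpa using Real.rpow_nonneg (hl i) t

lemma qf_Ff (t : ℝ) (x) : qf (Ff l E t) x = ∑ i, l i ^ t * qf (E i) x := by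
  simp only [Ff, qf_sum, qf_smul]

lemma bf_Ff (t : ℝ) (x y) : bf (Ff l E t) x y = ∑ i, l i ^ t * bf (E i) x y := by
  simp only [Ff, bf_sum, bf_smul]

lemma block (hl : ∀ i, 0 ≤ l i) (hE : ∀ i, (E i).PosSemidef)
    {a b : ℝ} (ha : 0 ≤ a) (hb : 0 ≤ b) (x y) :
    0 ≤ qf (Ff l E (a + a)) x + 2 * bf (Ff l E (a + b)) x y + qf (Ff l E (b + b)) y := by
  rw [qf_Ff, bf_Ff, qf_Ff, Finset.mul_sum, ← Finset.sum_add_distrib, ← Finset.sum_add_distrib]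
  refine Finset.sum_nonneg fun i _ => ?_
  have := psd_qf (hE i) (((l i ^ a : ℝ) : ℂ) • x + ((l i ^ b : ℝ) : ℂ) • y)
  rw [qf_comb (hE i).isHermitian] at this
  rw [Real.rpow_add_of_nonneg (hl i) ha ha, Real.rpow_add_of_nonneg (hl i) ha hb,
    Real.rpow_add_of_nonneg (hl i) hb hb]
  exact this

lemma kadison (hl : ∀ i, 0 ≤ l i) (hE : ∀ i, (E i).PosSemidef) (h1 : Ff l E 0 = 1)
    {p : ℝ} (hp : 0 ≤ p) (y) :
    qf 1 (Ff l E p *ᵥ y) ≤ qf (Ff l E (p + p)) y := by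
  have h := block l E hl hE le_rfl hp (-(Ff l E p *ᵥ y)) y
  rw [add_zero, zero_add, h1, qf_neg, bf_neg] at h
  have h2 : bf (Ff l E p) (Ff l E p *ᵥ y) y = qf 1 (Ff l E p *ᵥ y) := by
    rw [← one_mul (Ff l E p), bf_mul_right, one_mul]; rfl
  linarith

lemma cheb (hl : ∀ i, 0 ≤ l i) (hE : ∀ i, (E i).PosSemidef) (h1 : Ff l E 0 = 1)
    {t u μ : ℝ} (ht : 0 ≤ t) (hu : 0 ≤ u) (hμ : 0 < μ) (y) :
    μ ^ t * qf (Ff l E u) y + μ ^ u * qf (Ff l E t) y - μ ^ t * μ ^ u * qf 1 y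
      ≤ qf (Ff l E (t + u)) y := by
  rw [← h1]
  simp only [qf_Ff, Finset.mul_sum]
  rw [← Finset.sum_add_distrib, ← Finset.sum_sub_distrib]
  refine Finset.sum_le_sum fun i _ => ?_
  have hq := psd_qf (hE i) y
  rw [Real.rpow_add_of_nonneg (hl i) ht hu, Real.rpow_zero]
  have : 0 ≤ (l i ^ t - μ ^ t) * (l i ^ u - μ ^ u) := by
    rcases le_total (l i) μ with h | h
    · exact mul_nonneg_of_nonpos_of_nonpos
        (sub_nonpos.mpr (Real.rpow_le_rpow (hl i) h ht))
        (sub_nonpos.mpr (Real.rpow_le_rpow (hl i) h hu))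
    · exact mul_nonneg
        (sub_nonneg.mpr (Real.rpow_le_rpow hμ.le h ht))
        (sub_nonneg.mpr (Real.rpow_le_rpow hμ.le h hu))
  nlinarith [mul_nonneg this hq]

lemma dominate (hl : ∀ i, 0 ≤ l i) (hE : ∀ i, (E i).PosSemidef) (h1 : Ff l E 0 = 1)
    {t p : ℝ} (ht : 0 ≤ t) (hp : 0 ≤ p) :
    ∃ U ∈ unitaryGroup (Fin d) ℂ,
      (U * Ff l E (t + (p + p)) * Uᴴ - Ff l E p * Ff l E t * Ff l E p).PosSemidef := by
  rcases eq_or_lt_of_le (show 0 ≤ t + (p + p) by positivity) with h0 | hs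
  · have ht0 : t = 0 := by linarith
    have hp0 : p = 0 := by linarith
    subst ht0 hp0
    refine ⟨1, one_mem _, ?_⟩
    simp [h1, PosSemidef.zero]
  have hPh : (Ff l E p)ᴴ = Ff l E p := (Ff_psd l E hl hE p).isHermitian
  have hPTP : Ff l E p * Ff l E t * Ff l E p = (Ff l E p)ᴴ * Ff l E t * Ff l E p := by rw [hPh]
  have hT := Ff_psd l E hl hE t
  refine domination (P := Ff l E p) ?_ (Ff_psd l E hl hE _) ?_
  · rw [hPTP]
    exact (hT.conjTranspose_mul_mul_same _).isHermitian
  intro c hc x hx hcx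
  rw [hPTP, qf_conj] at hcx
  set y := Ff l E p *ᵥ x with hy
  have hx1 := qf_one_pos hx
  refine ⟨?_, ?_⟩
  · intro h
    rw [h] at hcx
    have : qf (Ff l E t) 0 = 0 := by simp [qf]
    nlinarith [mul_pos hc hx1]
  set μ : ℝ := c ^ (1 / (t + (p + p))) with hμd
  have hμ : 0 < μ := Real.rpow_pos_of_pos hc _
  have hμc : μ ^ t * μ ^ (p + p) = c := by
    rw [← Real.rpow_add hμ, hμd, ← Real.rpow_mul hc.le, one_div_mul_cancel hs.ne', Real.rpow_one]
  have hch := cheb l E hl hE h1 ht (add_nonneg hp hp) hμ y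
  have hk := kadison l E hl hE h1 hp y
  have hα : 0 < μ ^ t := Real.rpow_pos_of_pos hμ _
  have hβ : 0 < μ ^ (p + p) := Real.rpow_pos_of_pos hμ _
  generalize μ ^ t = α at *
  generalize μ ^ (p + p) = β at *
  have hsq := psd_qf (PosSemidef.one (n := Fin d) (R := ℂ))
    (((-β : ℝ) : ℂ) • x + ((1 : ℝ) : ℂ) • (Ff l E p *ᵥ y))
  rw [qf_comb isHermitian_one] at hsq
  have hyy : bf 1 x (Ff l E p *ᵥ y) = qf 1 y := by
    rw [← bf_mul_right, one_mul, ← hPh, ← mul_one (Ff l E p)ᴴ, bf_mul]; rfl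
  rw [hyy] at hsq
  have e1 := mul_le_mul_of_nonneg_left hk hα.le
  have e2 := mul_le_mul_of_nonneg_left hcx hβ.le
  have e3 := mul_nonneg hα.le hsq
  subst hμc
  nlinarith

end fam

lemma family {n d : ℕ}
    (Φ : Matrix (Fin n) (Fin n) ℂ →ₗ[ℂ] Matrix (Fin d) (Fin d) ℂ)
    (hΦ1 : Φ 1 = 1) (hΦpos : ∀ X : Matrix (Fin n) (Fin n) ℂ, X.PosSemidef → (Φ X).PosSemidef)
    (A : Matrix (Fin n) (Fin n) ℂ) (hA : A.PosSemidef) :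
    ∃ (l : Fin n → ℝ) (E : Fin n → Matrix (Fin d) (Fin d) ℂ), (∀ i, 0 ≤ l i) ∧
      (∀ i, (E i).PosSemidef) ∧ Ff l E 0 = 1 ∧ ∀ t, Φ (mpow A t) = Ff l E t := by
  have hH := hA.isHermitian
  set U : Matrix (Fin n) (Fin n) ℂ := hH.eigenvectorUnitary.1 with hU
  have hUU : U * Uᴴ = 1 := Unitary.coe_mul_star_self hH.eigenvectorUnitary
  have main : ∀ t, Φ (mpow A t) = Ff hH.eigenvalues
      (fun i => Φ (U * diagonal (Pi.single i 1) * Uᴴ)) t := by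
    intro t
    have hd : diagonal (fun i => ((hH.eigenvalues i ^ t : ℝ) : ℂ)) =
        ∑ i, ((hH.eigenvalues i ^ t : ℝ) : ℂ) • diagonal (Pi.single i (1 : ℂ)) := by
      ext j k
      simp only [Matrix.sum_apply, Matrix.smul_apply, diagonal_apply, smul_eq_mul]
      by_cases hjk : j = k
      · simp [hjk, Pi.single_apply]
      · simp [hjk]
    rw [mpow, cfc_spec hH, ← hU, hd, Finset.mul_sum, Finset.sum_mul, map_sum, Ff]
    refine Finset.sum_congr rfl fun i _ => ?_
    rw [mul_smul_comm, smul_mul_assoc, map_smul]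
  refine ⟨hH.eigenvalues, _, hA.eigenvalues_nonneg, fun i => ?_, ?_, main⟩
  · refine hΦpos _ (PosSemidef.mul_mul_conjTranspose_same (PosSemidef.diagonal ?_) _)
    exact Pi.single_nonneg.mpr zero_le_one
  · rw [← main, mpow, cfc_spec hH, ← hU]
    simp [hUU, hΦ1]

lemma tpu_final {m d : ℕ} (l : Fin m → ℝ) (E : Fin m → Matrix (Fin d) (Fin d) ℂ)
    (hl : ∀ i, 0 ≤ l i) (hE : ∀ i, (E i).PosSemidef) (h1 : Ff l E 0 = 1)
    (p q r : ℝ) (hp : 0 ≤ p) (hr : 0 ≤ r) (hpq : p ≤ q) (hrq : r ≤ q) :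
    ∃ U V : Matrix (Fin d) (Fin d) ℂ, U ∈ Matrix.unitaryGroup (Fin d) ℂ ∧
      V ∈ Matrix.unitaryGroup (Fin d) ℂ ∧
      loewnerLE (matAbs (Ff l E p * Ff l E q * Ff l E r))
        ((2 : ℂ)⁻¹ • (U * Ff l E (p + q + r) * Uᴴ + V * Ff l E (p + q + r) * Vᴴ)) := by
  obtain ⟨a, ha⟩ : ∃ a, a = (q + r - p) / 2 := ⟨_, rfl⟩
  obtain ⟨b, hb⟩ : ∃ b, b = (q + p - r) / 2 := ⟨_, rfl⟩
  have ha0 : 0 ≤ a := by linarith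
  have hb0 : 0 ≤ b := by linarith
  obtain ⟨U, hU, hUd⟩ := dominate l E hl hE h1 (add_nonneg ha0 ha0) hp
  obtain ⟨V, hV, hVd⟩ := dominate l E hl hE h1 (add_nonneg hb0 hb0) hr
  rw [show a + a + (p + p) = p + q + r by rw [ha]; ring] at hUd
  rw [show b + b + (r + r) = p + q + r by rw [hb]; ring] at hVd
  obtain ⟨W, hW, hWX⟩ := polar (Ff l E p * Ff l E q * Ff l E r)
  have hP : (Ff l E p)ᴴ = Ff l E p := (Ff_psd l E hl hE p).isHermitian
  have hR : (Ff l E r)ᴴ = Ff l E r := (Ff_psd l E hl hE r).isHermitian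
  have hS := Ff_psd l E hl hE (p + q + r)
  refine ⟨Wᴴ * U, V, mul_mem (Unitary.star_mem hW) hU, hV, ?_⟩
  have hhalf : (2 : ℂ)⁻¹ = ((2⁻¹ : ℝ) : ℂ) := by simp
  apply psd_of_qf
  · refine IsHermitian.sub ?_ ?_
    · refine (((hS.mul_mul_conjTranspose_same _).add
        (hS.mul_mul_conjTranspose_same _)).smul ?_).isHermitian
      rw [hhalf, Complex.zero_le_real]; norm_num
    · exact cfc_predicate (R := ℝ) (p := IsSelfAdjoint) _ _
  intro y
  rw [qf_sub, hhalf, qf_smul, qf_add, ← hWX]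
  have e1 : Wᴴ * U * Ff l E (p + q + r) * (Wᴴ * U)ᴴ =
      Wᴴ * (U * Ff l E (p + q + r) * Uᴴ) * W := by
    rw [conjTranspose_mul, conjTranspose_conjTranspose]; simp only [mul_assoc]
  rw [e1, qf_conj]
  have h2 := psd_qf hUd (W *ᵥ y)
  have h3 := psd_qf hVd y
  have eP : Ff l E p * Ff l E (a + a) * Ff l E p =
    (Ff l E p)ᴴ * Ff l E (a + a) * Ff l E p := by rw [hP]
  have eR : Ff l E r * Ff l E (b + b) * Ff l E r =
    (Ff l E r)ᴴ * Ff l E (b + b) * Ff l E r := by rw [hR]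
  rw [qf_sub, eP, qf_conj] at h2
  rw [qf_sub, eR, qf_conj] at h3
  have h4 : qf (Wᴴ * (Ff l E p * Ff l E q * Ff l E r)) y =
      bf (Ff l E q) (Ff l E p *ᵥ (W *ᵥ y)) (Ff l E r *ᵥ y) := by
    change bf _ y y = _
    rw [bf_mul, bf_mul_right]
    conv_lhs => rw [← hP]
    rw [bf_mul]
  have h5 := block l E hl hE ha0 hb0 (-(Ff l E p *ᵥ (W *ᵥ y))) (Ff l E r *ᵥ y)
  rw [qf_neg, bf_neg, show a + b = q by rw [ha, hb]; ring] at h5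
  rw [h4]
  linarith

end TPU

/-- For a unital positive linear map `Φ`, `A ≥ 0` and `p, q, r ≥ 0` with `q ≥ p` and `q ≥ r`,
there are unitaries `U, V` with
`|Φ(A^p) Φ(A^q) Φ(A^r)| ≤ (U Φ(A^{p+q+r}) U* + V Φ(A^{p+q+r}) V*)/2`. -/
theorem triple_product_two_unitaries {n d : ℕ}
    (Φ : Matrix (Fin n) (Fin n) ℂ →ₗ[ℂ] Matrix (Fin d) (Fin d) ℂ)
    (hΦ1 : Φ 1 = 1) (hΦpos : ∀ X : Matrix (Fin n) (Fin n) ℂ, X.PosSemidef → (Φ X).PosSemidef)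
    (A : Matrix (Fin n) (Fin n) ℂ) (hA : A.PosSemidef)
    (p q r : ℝ) (hp : 0 ≤ p) (hq : 0 ≤ q) (hr : 0 ≤ r) (hpq : p ≤ q) (hrq : r ≤ q) :
    ∃ U V : Matrix (Fin d) (Fin d) ℂ, U ∈ Matrix.unitaryGroup (Fin d) ℂ ∧
      V ∈ Matrix.unitaryGroup (Fin d) ℂ ∧
      loewnerLE (matAbs (Φ (mpow A p) * Φ (mpow A q) * Φ (mpow A r)))
        ((2 : ℂ)⁻¹ • (U * Φ (mpow A (p + q + r)) * Uᴴ + V * Φ (mpow A (p + q + r)) * Vᴴ)) := by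

  obtain ⟨l, E, hl, hE, h1, hF⟩ := family Φ hΦ1 hΦpos A hA
  simp only [hF]
  exact tpu_final l E hl hE h1 p q r hp hr hpq hrq
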